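/- Let p be a prime number and let D = p or D = 2p, with D not a perfect square. If T_D is divisible by 4, then 1 appears as a partial quotient in the period of the continued fraction of √D, i.e., there exists k with 1 ≤ k ≤ T_D and aₖ = 1. -/

import Mathlib

/-- The sequence of complete quotients of the continued fraction of `x`:
`α₀ = x`, `α_{k+1} = 1/(αₖ - ⌊αₖ⌋)`. -/
noncomputable def cfAlpha (x : ℝ) : ℕ → ℝ
  | 0 => x
  | k + 1 => 1 / (cfAlpha x k - (⌊cfAlpha x k⌋ : ℝ))

/-- The partial quotients of the continued fraction of `x`: `aₖ = ⌊αₖ⌋`. -/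
noncomputable def cfA (x : ℝ) (k : ℕ) : ℤ :=
  ⌊cfAlpha x k⌋

/-- The length of the minimal period of the continued fraction of `x`:
the least `l > 0` with `a_{k+l} = a_k` for all `k ≥ 1`. -/
noncomputable def cfPeriod (x : ℝ) : ℕ :=
  sInf {l : ℕ | 0 < l ∧ ∀ k : ℕ, 1 ≤ k → cfA x (k + l) = cfA x k}

/-!
The complete quotients of `√D` after the first are reduced surds `(P + √D) / Q`; on these the
continued fraction step `σ` and the reversal `τ`, which swaps `Q` with the `Q` of the predecessor,
satisfy `σⁿ τ σⁿ = τ`. Starting from `ε = ⌊√D⌋ + √D`, for which `σ ε = τ ε`, an even period `2m`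
forces `σ μ = τ μ` at the midpoint `μ = σᵐ ε`; this says that the denominator `Q` of `μ` divides
`2P`. For `D = p` or `D = 2p` only `Q = 1` and `Q = 2` remain, and `Q = 1` contradicts minimality.

Suppose `Q = 2` and no partial quotient is `1`. Then the complete quotient after the midpoint is
twice the first one, and comparing the expansions of `x` and `2x` two steps at a time shows that
this doubling persists after every even number of steps. When `m` is even, a full period therefore
multiplies the first complete quotient by `4`, which is absurd.
-/

open Function

section CompleteQuotients

variable {x : ℝ}

lemma cfAlpha_succ (x : ℝ) (k : ℕ) : cfAlpha x (k + 1) = (Int.fract (cfAlpha x k))⁻¹ :=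
  one_div _

lemma cfAlpha_one (x : ℝ) : cfAlpha x 1 = (Int.fract x)⁻¹ :=
  cfAlpha_succ x 0

lemma cfAlpha_add (x : ℝ) (i k : ℕ) : cfAlpha x (i + k) = cfAlpha (cfAlpha x i) k := by
  induction k with
  | zero => rfl
  | succ k ih => rw [← add_assoc, cfAlpha_succ, ih, cfAlpha_succ]

lemma cfA_add (x : ℝ) (i k : ℕ) : cfA x (i + k) = cfA (cfAlpha x i) k := by
  rw [cfA, cfA, cfAlpha_add]

lemma cfAlpha_intCast_add (n : ℤ) (x : ℝ) {k : ℕ} (hk : 1 ≤ k) :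
    cfAlpha (n + x) k = cfAlpha x k := by
  obtain ⟨k, rfl⟩ := Nat.exists_eq_add_of_le hk
  rw [cfAlpha_add, cfAlpha_add, cfAlpha_one, cfAlpha_one, Int.fract_intCast_add]

lemma irrational_cfAlpha (hx : Irrational x) (k : ℕ) : Irrational (cfAlpha x k) := by
  induction k with
  | zero => exact hx
  | succ k ih => exact cfAlpha_succ x k ▸ (ih.sub_intCast _).inv

lemma convergent_eq_of_cfA_eq {x y : ℝ} (h : cfA x = cfA y) (n : ℕ) :
    x.convergent n = y.convergent n := by
  have hfloor : ⌊x⌋ = ⌊y⌋ := congrFun h 0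
  induction n generalizing x y with
  | zero => simp only [Real.convergent_zero, hfloor]
  | succ n ih =>
    have htail : cfA (Int.fract x)⁻¹ = cfA (Int.fract y)⁻¹ := by
      funext k
      simpa only [cfA_add, cfAlpha_one] using congrFun h (1 + k)
    rw [Real.convergent_succ, Real.convergent_succ, hfloor, ih htail (congrFun htail 0)]

theorem cfA_injective : Injective cfA := fun x y h ↦ by
  have hconvs : (GenContFract.of x).convs = (GenContFract.of y).convs := by
    funext n
    rw [Real.convs_eq_convergent, Real.convs_eq_convergent, convergent_eq_of_cfA_eq h]
  exact tendsto_nhds_unique (GenContFract.of_convergence x)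
    (hconvs ▸ GenContFract.of_convergence y)

lemma fract_two_mul (hx : Irrational x) (h : 2 ≤ cfA x 1) :
    Int.fract (2 * x) = 2 * Int.fract x := by
  have hpos : 0 < Int.fract x := Int.fract_pos.2 (hx.ne_int _)
  have hle : Int.fract x ≤ 1 / 2 := by
    have : (2 : ℝ) ≤ (Int.fract x)⁻¹ := by
      simpa only [Int.cast_ofNat, cfAlpha_one] using Int.le_floor.1 h
    simpa using (le_inv_comm₀ two_pos hpos).1 this
  have hne : Int.fract x ≠ 1 / 2 := by
    simpa using (hx.sub_intCast ⌊x⌋).ne_rat (1 / 2)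
  have hlt : Int.fract x < 1 / 2 := hle.lt_of_ne hne
  refine Int.fract_eq_iff.2 ⟨by positivity, by linarith, 2 * ⌊x⌋, ?_⟩
  rw [Int.fract]
  push_cast
  ring

lemma cfAlpha_two_mul_one (hx : Irrational x) (h : 2 ≤ cfA x 1) :
    cfAlpha (2 * x) 1 = cfAlpha x 1 / 2 := by
  rw [cfAlpha_one, cfAlpha_one, fract_two_mul hx h, mul_inv, div_eq_inv_mul]

lemma cfAlpha_two_mul_two (hx : Irrational x) (h₁ : 2 ≤ cfA x 1) (h₂ : 2 ≤ cfA (2 * x) 2) :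
    cfAlpha (2 * x) 2 = 2 * cfAlpha x 2 := by
  set y := cfAlpha (2 * x) 1 with hy
  have hxy : cfAlpha x 1 = 2 * y := by rw [hy, cfAlpha_two_mul_one hx h₁]; ring
  have hirr : Irrational y := irrational_cfAlpha (hx.natCast_mul two_ne_zero) 1
  have hhalf : cfAlpha (2 * y) 1 = cfAlpha y 1 / 2 :=
    cfAlpha_two_mul_one hirr (cfA_add (2 * x) 1 1 ▸ h₂)
  rw [cfAlpha_add (2 * x) 1 1, cfAlpha_add x 1 1, hxy, hhalf, ← hy]
  ring

lemma cfAlpha_two_mul_even (hx : Irrational x) (h₁ : ∀ k, 1 ≤ k → 2 ≤ cfA x k)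
    (h₂ : ∀ k, 1 ≤ k → 2 ≤ cfA (2 * x) k) (n : ℕ) :
    cfAlpha (2 * x) (2 * n) = 2 * cfAlpha x (2 * n) := by
  induction n with
  | zero => rfl
  | succ n ih =>
    rw [mul_add_one, cfAlpha_add, cfAlpha_add x, ih]
    refine cfAlpha_two_mul_two (irrational_cfAlpha hx _) ?_ ?_
    · exact cfA_add x _ 1 ▸ h₁ _ (by lia)
    · exact ih ▸ cfA_add (2 * x) _ 2 ▸ h₂ _ (by lia)

lemma cfAlpha_eq_four_mul (hx : Irrational x) (h : ∀ k, 1 ≤ k → 2 ≤ cfA x k) {n : ℕ}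
    (hn : cfAlpha x (2 * n) = 2 * x) : cfAlpha x (4 * n) = 4 * x := by
  have h₂ (k : ℕ) (hk : 1 ≤ k) : 2 ≤ cfA (2 * x) k := by
    rw [← hn, ← cfA_add]
    exact h _ (by lia)
  calc cfAlpha x (4 * n) = cfAlpha x (2 * n + 2 * n) := by ring_nf
    _ = cfAlpha (2 * x) (2 * n) := by rw [cfAlpha_add, hn]
    _ = 2 * cfAlpha x (2 * n) := cfAlpha_two_mul_even hx h h₂ n
    _ = 4 * x := by rw [hn]; ring

end CompleteQuotients

lemma mul_eq_sqrt_sub_mul_sqrt_add {D : ℕ} {n q r : ℤ} (h : q * r = D - n ^ 2) :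
    (q * r : ℝ) = (√D - n) * (√D + n) := by
  have hcast : (q * r : ℝ) = D - n ^ 2 := mod_cast h
  linear_combination hcast - Real.sq_sqrt (Nat.cast_nonneg (α := ℝ) D)

/-- A reduced quadratic surd `(num + √D) / den`: it exceeds `1` and its conjugate lies in `(-1, 0)`.
The integer `prevDen`, determined by `num` and `den`, is the denominator of its predecessor in a
continued fraction. The bound `√D - num < prevDen`, equivalent to `den < √D + num`, says that the
surd exceeds `1`; in this form the conditions are symmetric in `den` and `prevDen`. -/
@[ext]
structure ReducedSurd (D : ℕ) where
  num : ℤ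
  den : ℤ
  prevDen : ℤ
  den_mul_prevDen : den * prevDen = D - num ^ 2
  irrational_sqrt : Irrational √(D : ℝ)
  num_lt_sqrt : num < √(D : ℝ)
  sqrt_sub_num_lt_den : √(D : ℝ) - num < den
  sqrt_sub_num_lt_prevDen : √(D : ℝ) - num < prevDen

namespace ReducedSurd

variable {D : ℕ}

section Step

variable (s : ReducedSurd D)

lemma sqrt_sub_num_pos : 0 < √(D : ℝ) - s.num := sub_pos.2 s.num_lt_sqrt

/-- The reversal `α ↦ -1/α'`, where `α'` is the conjugate of `α`. -/
def reverse : ReducedSurd D where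
  num := s.num
  den := s.prevDen
  prevDen := s.den
  den_mul_prevDen := by rw [mul_comm, s.den_mul_prevDen]
  irrational_sqrt := s.irrational_sqrt
  num_lt_sqrt := s.num_lt_sqrt
  sqrt_sub_num_lt_den := s.sqrt_sub_num_lt_prevDen
  sqrt_sub_num_lt_prevDen := s.sqrt_sub_num_lt_den

lemma reverse_reverse : s.reverse.reverse = s := rfl

lemma den_pos : 0 < s.den := by
  exact_mod_cast s.sqrt_sub_num_pos.trans s.sqrt_sub_num_lt_den

lemma prevDen_pos : 0 < s.prevDen :=
  s.reverse.den_pos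

lemma den_lt_sqrt_add_num : s.den < √(D : ℝ) + s.num := by
  refine lt_of_mul_lt_mul_left ?_ s.sqrt_sub_num_pos.le
  rw [← mul_eq_sqrt_sub_mul_sqrt_add s.den_mul_prevDen, mul_comm]
  exact mul_lt_mul_of_pos_left s.sqrt_sub_num_lt_prevDen (mod_cast s.den_pos)

lemma num_pos : 0 < s.num := by
  have h : (0 : ℝ) < s.num := by linarith [s.sqrt_sub_num_lt_den, s.den_lt_sqrt_add_num]
  exact_mod_cast h

lemma ext_num_den {s t : ReducedSurd D} (hnum : s.num = t.num) (hden : s.den = t.den) :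
    s = t := by
  refine ReducedSurd.ext hnum hden (mul_left_cancel₀ s.den_pos.ne' ?_)
  rw [s.den_mul_prevDen, hden, t.den_mul_prevDen, hnum]

instance : Finite (ReducedSurd D) := by
  have hnum (s : ReducedSurd D) : s.num ∈ Set.Icc (0 : ℤ) D :=
    ⟨s.num_pos.le, by nlinarith [s.num_pos, mul_pos s.den_pos s.prevDen_pos, s.den_mul_prevDen]⟩
  have hden (s : ReducedSurd D) : s.den ∈ Set.Icc (0 : ℤ) D :=
    ⟨s.den_pos.le, by nlinarith [s.den_pos, s.prevDen_pos, s.den_mul_prevDen]⟩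
  refine Finite.of_injective
    (fun s ↦ ((⟨s.num, hnum s⟩, ⟨s.den, hden s⟩) : Set.Icc (0 : ℤ) D × Set.Icc (0 : ℤ) D)) ?_
  intro s t h
  simp only [Prod.mk.injEq, Subtype.mk.injEq] at h
  exact ext_num_den h.1 h.2

/-- The real number represented by a reduced surd. -/
noncomputable def value : ℝ := (s.num + √D) / s.den

lemma den_mul_value : s.den * s.value = s.num + √D :=
  mul_div_cancel₀ _ (mod_cast s.den_pos.ne')

lemma one_lt_value : 1 < s.value := by
  rw [value, one_lt_div (mod_cast s.den_pos), add_comm]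
  exact s.den_lt_sqrt_add_num

lemma irrational_value : Irrational s.value :=
  (s.irrational_sqrt.intCast_add s.num).div_intCast s.den_pos.ne'

lemma value_injective : Injective (value : ReducedSurd D → ℝ) := by
  intro s t h
  have hcross : (s.num + √D) * t.den = (t.num + √D) * s.den :=
    (div_eq_div_iff (mod_cast s.den_pos.ne') (mod_cast t.den_pos.ne')).1 h
  have hden : s.den = t.den := by
    by_contra hne
    have hirr := (s.irrational_sqrt.intCast_mul (sub_ne_zero.2 hne)).ne_int
      (s.num * t.den - t.num * s.den)
    refine hirr ?_
    push_cast
    linarith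
  refine ext_num_den ?_ hden
  rw [hden] at hcross
  have hnum := mul_right_cancel₀ (mod_cast t.den_pos.ne') hcross
  exact_mod_cast add_right_cancel hnum

lemma value_reverse : s.reverse.value = s.den / (√D - s.num) := by
  have h : s.reverse.value = (s.num + √D) / s.prevDen := rfl
  have hprev : (s.prevDen : ℝ) ≠ 0 := mod_cast s.prevDen_pos.ne'
  rw [h, div_eq_div_iff hprev s.sqrt_sub_num_pos.ne',
    mul_eq_sqrt_sub_mul_sqrt_add s.den_mul_prevDen]
  ring

/-- The numerator of the successor in the continued fraction. -/
noncomputable def nextNum : ℤ := ⌊s.value⌋ * s.den - s.num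

lemma sqrt_sub_nextNum : √(D : ℝ) - s.nextNum = s.den * Int.fract s.value := by
  rw [nextNum, Int.fract, mul_sub, den_mul_value]
  push_cast
  ring

lemma sqrt_sub_nextNum_pos : 0 < √(D : ℝ) - s.nextNum := by
  rw [sqrt_sub_nextNum]
  exact mul_pos (mod_cast s.den_pos) (Int.fract_pos.2 (s.irrational_value.ne_int _))

lemma den_lt_sqrt_add_nextNum : s.den < √(D : ℝ) + s.nextNum := by
  have hfloor : (1 : ℝ) ≤ ⌊s.value⌋ := mod_cast Int.le_floor.2 (mod_cast s.one_lt_value.le)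
  have hle : (s.den : ℝ) ≤ ⌊s.value⌋ * s.den :=
    le_mul_of_one_le_left (mod_cast s.den_pos.le) hfloor
  rw [nextNum]
  push_cast
  linarith [s.sqrt_sub_num_pos]

/-- The continued fraction step `α ↦ 1 / (α - ⌊α⌋)`. The usual new denominator
`(D - nextNum ^ 2) / den` is written without a division. -/
noncomputable def step : ReducedSurd D :=
  have hmul : (s.prevDen + ⌊s.value⌋ * (s.num - s.nextNum)) * s.den = D - s.nextNum ^ 2 := by
    rw [nextNum]
    linear_combination s.den_mul_prevDen
  have hden : (0 : ℝ) < s.den := mod_cast s.den_pos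
  { num := s.nextNum
    den := s.prevDen + ⌊s.value⌋ * (s.num - s.nextNum)
    prevDen := s.den
    den_mul_prevDen := hmul
    irrational_sqrt := s.irrational_sqrt
    num_lt_sqrt := sub_pos.1 s.sqrt_sub_nextNum_pos
    sqrt_sub_num_lt_den := by
      refine lt_of_mul_lt_mul_right ?_ hden.le
      rw [mul_eq_sqrt_sub_mul_sqrt_add hmul]
      exact mul_lt_mul_of_pos_left s.den_lt_sqrt_add_nextNum s.sqrt_sub_nextNum_pos
    sqrt_sub_num_lt_prevDen :=
      s.sqrt_sub_nextNum ▸ mul_lt_of_lt_one_right hden (Int.fract_lt_one _) }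

lemma step_num : s.step.num = s.nextNum := rfl

lemma value_step : s.step.value = (Int.fract s.value)⁻¹ := by
  have h : s.step.value = s.den / (√D - s.nextNum) := s.step.reverse.value_reverse
  rw [h, sqrt_sub_nextNum, div_mul_cancel_left₀ (mod_cast s.den_pos.ne')]

lemma floor_value_reverse_step : ⌊s.step.reverse.value⌋ = ⌊s.value⌋ := by
  have hden : (0 : ℝ) < s.den := mod_cast s.den_pos
  have hvalue : s.step.reverse.value = ⌊s.value⌋ + (√D - s.num) / s.den := by
    have h : s.step.reverse.value = (s.step.num + √D) / s.den := rfl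
    rw [h, step_num, nextNum]
    push_cast
    field_simp
    ring
  rw [hvalue, Int.floor_intCast_add, add_eq_left, Int.floor_eq_zero_iff]
  exact ⟨(div_pos s.sqrt_sub_num_pos hden).le, (div_lt_one hden).2 s.sqrt_sub_num_lt_den⟩

lemma step_reverse_step : s.step.reverse.step = s.reverse := by
  have hnum : s.step.reverse.step.num = s.num := by
    rw [step_num, nextNum, floor_value_reverse_step]
    change ⌊s.value⌋ * s.den - s.nextNum = s.num
    rw [nextNum]
    ring
  have hprev : s.step.reverse.step.prevDen = s.den := rfl
  exact congrArg reverse (ext_num_den (s := s.step.reverse.step.reverse) hnum hprev)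

lemma step_injective : Injective (step : ReducedSurd D → ReducedSurd D) := by
  refine LeftInverse.injective (g := fun s ↦ s.reverse.step.reverse) fun s ↦ ?_
  simp only [step_reverse_step, reverse_reverse]

lemma step_iterate_reverse_step_iterate (n : ℕ) :
    step^[n] (step^[n] s).reverse = s.reverse := by
  induction n with
  | zero => rfl
  | succ n ih => rw [iterate_succ_apply, iterate_succ_apply', step_reverse_step, ih]

lemma step_iterate_half {s : ReducedSurd D} {m : ℕ} (hs : s.step = s.reverse)
    (hm : IsPeriodicPt step (2 * m) s) : (step^[m] s).step = (step^[m] s).reverse := by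
  apply step_injective.iterate m
  calc step^[m] (step^[m] s).step = step (step^[2 * m] s) := by
        rw [two_mul, iterate_add_apply, Commute.iterate_self step m]
    _ = s.reverse := by rw [hm.eq, hs]
    _ = step^[m] (step^[m] s).reverse := (s.step_iterate_reverse_step_iterate m).symm

lemma cfAlpha_value (k : ℕ) : cfAlpha s.value k = (step^[k] s).value := by
  induction k with
  | zero => rfl
  | succ k ih => rw [cfAlpha_succ, ih, iterate_succ_apply', value_step]

lemma isPeriodicPt_step_iff {l : ℕ} :
    IsPeriodicPt step l s ↔ ∀ k, 1 ≤ k → cfA s.value (k + l) = cfA s.value k := by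
  have hcfA (k : ℕ) : cfA s.value (k + l) = cfA (step^[l] s).value k := by
    rw [add_comm, cfA_add, cfAlpha_value]
  simp only [hcfA]
  refine ⟨fun h k _ ↦ by rw [h.eq], fun h ↦ ?_⟩
  refine step_injective (value_injective (cfA_injective (funext fun k ↦ ?_)))
  simpa only [cfA_add, cfAlpha_value, iterate_one] using h (1 + k) (Nat.le_add_right 1 k)

lemma minimalPeriod_step_pos : 0 < minimalPeriod step s :=
  minimalPeriod_pos_of_mem_periodicPts (step_injective.mem_periodicPts s)

lemma cfPeriod_value : cfPeriod s.value = minimalPeriod step s := by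
  have hmem := s.isPeriodicPt_step_iff.1 (isPeriodicPt_minimalPeriod step s)
  refine le_antisymm (Nat.sInf_le ⟨s.minimalPeriod_step_pos, hmem⟩)
    (le_csInf ⟨_, s.minimalPeriod_step_pos, hmem⟩ fun l hl ↦ ?_)
  exact (s.isPeriodicPt_step_iff.2 hl.2).minimalPeriod_le hl.1

lemma exists_cfA_value_eq {k : ℕ} (hk : 1 ≤ k) :
    ∃ j, 1 ≤ j ∧ j ≤ cfPeriod s.value ∧ cfA s.value j = cfA s.value k := by
  obtain ⟨k, rfl⟩ := Nat.exists_eq_add_of_le' hk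
  refine ⟨k % minimalPeriod step s + 1, Nat.le_add_left 1 _,
    s.cfPeriod_value.symm ▸ Nat.mod_lt k s.minimalPeriod_step_pos, ?_⟩
  simp only [cfA, cfAlpha_value, iterate_succ_apply', iterate_mod_minimalPeriod_eq]

lemma two_le_cfA_value (h : ∀ k, 1 ≤ k → k ≤ cfPeriod s.value → cfA s.value k ≠ 1) {k : ℕ}
    (hk : 1 ≤ k) : 2 ≤ cfA s.value k := by
  obtain ⟨j, hj, hjT, hjk⟩ := s.exists_cfA_value_eq hk
  have hone : 1 ≤ cfA s.value j := by
    rw [cfA, cfAlpha_value]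
    exact Int.le_floor.2 (mod_cast (one_lt_value _).le)
  have hne := h j hj hjT
  lia

end Step

section Principal

/-- The reduced surd `⌊√D⌋ + √D`, whose expansion differs from that of `√D` only in the first
partial quotient. -/
noncomputable def principal (hD : Irrational √(D : ℝ)) : ReducedSurd D where
  num := ⌊√(D : ℝ)⌋
  den := 1
  prevDen := D - ⌊√(D : ℝ)⌋ ^ 2
  den_mul_prevDen := one_mul _
  irrational_sqrt := hD
  num_lt_sqrt := (Int.floor_le _).lt_of_ne (hD.ne_int _).symm
  sqrt_sub_num_lt_den := Int.cast_one (R := ℝ) ▸ Int.fract_lt_one √(D : ℝ)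
  sqrt_sub_num_lt_prevDen := by
    have hlt : (⌊√(D : ℝ)⌋ : ℝ) < √D := (Int.floor_le _).lt_of_ne (hD.ne_int _).symm
    have hone : (1 : ℝ) ≤ ⌊√(D : ℝ)⌋ := by
      have hD0 : D ≠ 0 := by rintro rfl; simp at hD
      have h : (1 : ℤ) ≤ ⌊√(D : ℝ)⌋ :=
        Int.le_floor.2 (by simpa [Nat.one_le_iff_ne_zero] using hD0)
      exact_mod_cast h
    push_cast
    nlinarith [Real.sq_sqrt (Nat.cast_nonneg (α := ℝ) D)]

variable (hD : Irrational √(D : ℝ))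

lemma value_principal : (principal hD).value = ⌊√(D : ℝ)⌋ + √D := by
  simp [value, principal]

lemma cfA_value_principal {k : ℕ} (hk : 1 ≤ k) : cfA (principal hD).value k = cfA √D k := by
  rw [value_principal, cfA, cfAlpha_intCast_add _ _ hk, cfA]

lemma cfPeriod_value_principal : cfPeriod (principal hD).value = cfPeriod √D := by
  have hiff (l : ℕ) :
      (∀ k, 1 ≤ k → cfA (principal hD).value (k + l) = cfA (principal hD).value k) ↔
        ∀ k, 1 ≤ k → cfA √D (k + l) = cfA √D k := by
    refine forall₂_congr fun k hk ↦ ?_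
    rw [cfA_value_principal hD hk, cfA_value_principal hD (Nat.le_add_right_of_le hk)]
  simp only [cfPeriod, hiff]

lemma step_principal : (principal hD).step = (principal hD).reverse := by
  have hfloor : ⌊(principal hD).value⌋ = 2 * ⌊√(D : ℝ)⌋ := by
    rw [value_principal, Int.floor_intCast_add, two_mul]
  have hnum : (principal hD).step.num = (principal hD).num := by
    rw [step_num, nextNum, hfloor]
    simp only [principal]
    ring
  exact congrArg reverse (ext_num_den (s := (principal hD).step.reverse) hnum rfl)

variable {hD}

lemma num_eq_floor_sqrt {s : ReducedSurd D} (h : √(D : ℝ) - s.num ≤ 1) :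
    s.num = ⌊√(D : ℝ)⌋ := by
  have hne : √(D : ℝ) ≠ s.num + 1 := mod_cast s.irrational_sqrt.ne_int (s.num + 1)
  refine (Int.floor_eq_iff.2 ⟨s.num_lt_sqrt.le, ?_⟩).symm
  exact lt_of_le_of_ne (by linarith) hne

lemma eq_principal_of_den_eq_one {s : ReducedSurd D} (h : s.den = 1) :
    s = principal s.irrational_sqrt := by
  refine ext_num_den (num_eq_floor_sqrt ?_) h
  simpa [h] using s.sqrt_sub_num_lt_den.le

lemma value_reverse_of_den_eq_two {s : ReducedSurd D} (hden : s.den = 2)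
    (h : 2 ≤ s.reverse.value) :
    s.reverse.value = 2 * (principal s.irrational_sqrt).reverse.value := by
  have hsub : √(D : ℝ) - s.num ≤ 1 := by
    rw [value_reverse, hden, le_div_iff₀ s.sqrt_sub_num_pos] at h
    push_cast at h
    linarith
  have hnum : (principal s.irrational_sqrt).num = s.num := (num_eq_floor_sqrt hsub).symm
  rw [value_reverse, value_reverse, hnum, hden]
  simp [principal, div_eq_mul_inv]

lemma den_dvd_of_step_eq_reverse {s : ReducedSurd D} (h : s.step = s.reverse) :
    s.den ∣ 2 * s.num := by
  have hnum : s.nextNum = s.num := congrArg (fun t ↦ t.num) h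
  rw [nextNum] at hnum
  exact ⟨⌊s.value⌋, by linarith⟩

lemma den_step_iterate_half_ne_one {m : ℕ} (hm : 0 < m)
    (hmin : minimalPeriod step (principal hD) = 2 * m) : (step^[m] (principal hD)).den ≠ 1 := by
  intro hden
  have hper : IsPeriodicPt step m (principal hD) := eq_principal_of_den_eq_one hden
  have hle := hper.minimalPeriod_le hm
  lia

lemma den_step_iterate_half_ne_two {c : ℕ} (hper : IsPeriodicPt step (4 * c) (principal hD))
    (h : ∀ k, 1 ≤ k → 2 ≤ cfA (principal hD).value k) :
    (step^[2 * c] (principal hD)).den ≠ 2 := by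
  intro hden
  set e := principal hD
  have hcfA (k : ℕ) : cfA e.step.value k = cfA e.value (1 + k) := by
    rw [cfA_add, cfAlpha_value, iterate_one]
  have hsymm : (step^[2 * c] e).step = (step^[2 * c] e).reverse :=
    step_iterate_half (step_principal hD) (by rwa [← mul_assoc])
  have hhalf : cfAlpha e.step.value (2 * c) = (step^[2 * c] e).reverse.value := by
    rw [cfAlpha_value, ← hsymm, (Commute.self_iterate step (2 * c)).eq]
  have hdouble : cfAlpha e.step.value (2 * c) = 2 * e.step.value := by
    have hge : 2 ≤ (step^[2 * c] e).reverse.value := by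
      rw [← hhalf]
      exact_mod_cast Int.le_floor.1 (hcfA (2 * c) ▸ h _ (Nat.le_add_right 1 _))
    rw [hhalf, value_reverse_of_den_eq_two hden hge, step_principal]
  have hfour : cfAlpha e.step.value (4 * c) = 4 * e.step.value :=
    cfAlpha_eq_four_mul e.step.irrational_value
      (fun k _ ↦ hcfA k ▸ h _ (Nat.le_add_right 1 k)) hdouble
  have hone : cfAlpha e.step.value (4 * c) = e.step.value := by
    rw [cfAlpha_value, ← iterate_succ_apply, iterate_succ_apply', hper.eq]
  linarith [e.step.one_lt_value]

end Principal

end ReducedSurd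

section Arithmetic

variable {p D : ℕ} {n q r : ℤ}

lemma dvd_two_mul_of_mul_eq_sub_sq (h : q * r = D - n ^ 2) (hdvd : q ∣ 2 * n) :
    q ∣ 2 * (D : ℤ) := by
  have hD : 2 * (D : ℤ) = q * (2 * r) + 2 * n * n := by linear_combination -2 * h
  exact hD ▸ (dvd_mul_right _ _).add (hdvd.mul_right n)

lemma prime_not_dvd_of_mul_eq_sub_sq (hp : p.Prime) (hpD : p ∣ D) (hD : D ≤ p ^ 2)
    (h : q * r = D - n ^ 2) (hqr : 0 < q * r) (hn : 0 < n) : ¬ (p : ℤ) ∣ q := by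
  intro hpq
  have hsq : (p : ℤ) ∣ n ^ 2 := by
    rw [show n ^ 2 = D - q * r by linarith]
    exact (Int.natCast_dvd_natCast.2 hpD).sub (hpq.mul_right r)
  have hle : (p : ℤ) ≤ n := Int.le_of_dvd hn ((Nat.prime_iff_prime_int.1 hp).dvd_of_dvd_pow hsq)
  have hlt : n ^ 2 < (p : ℤ) ^ 2 :=
    calc n ^ 2 < (D : ℤ) := by linarith
      _ ≤ (p : ℤ) ^ 2 := mod_cast hD
  exact hlt.not_ge (by gcongr)

lemma not_four_dvd_two_mul_prime (hp : p.Prime) (hns : ¬ IsSquare (2 * p)) : ¬ 4 ∣ 2 * p := by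
  intro h
  have htwo : p = 2 := ((Nat.prime_dvd_prime_iff_eq Nat.prime_two hp).1 (by lia)).symm
  subst htwo
  exact hns ⟨2, rfl⟩

lemma eq_one_or_two_of_mul_eq_sub_sq (hp : p.Prime) (hD : D = p ∨ D = 2 * p) (hns : ¬ IsSquare D)
    (h : q * r = D - n ^ 2) (hdvd : q ∣ 2 * n) (hq : 0 < q) (hr : 0 < r) (hn : 0 < n) :
    q = 1 ∨ q = 2 := by
  have hpq : ¬ (p : ℤ) ∣ q := by
    refine prime_not_dvd_of_mul_eq_sub_sq hp ?_ ?_ h (mul_pos hq hr) hn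
    · rcases hD with rfl | rfl <;> simp
    · rcases hD with rfl | rfl <;> nlinarith [hp.two_le]
  have hcop : IsCoprime q p :=
    ((Nat.prime_iff_prime_int.1 hp).coprime_iff_not_dvd.2 hpq).symm
  have hqD : q ∣ 2 * (D : ℤ) := dvd_two_mul_of_mul_eq_sub_sq h hdvd
  rcases hD with rfl | rfl
  · have hle : q ≤ 2 := Int.le_of_dvd two_pos (hcop.dvd_of_dvd_mul_right hqD)
    lia
  · have hfour : q ∣ 4 := hcop.dvd_of_dvd_mul_right (by simpa [← mul_assoc] using hqD)
    have hne : q ≠ 4 := by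
      rintro rfl
      obtain ⟨m, rfl⟩ : (2 : ℤ) ∣ n := by lia
      have hdvd : (4 : ℤ) ∣ (2 * p : ℕ) := ⟨r + m ^ 2, by linarith⟩
      exact not_four_dvd_two_mul_prime hp hns (mod_cast hdvd)
    have hle : q ≤ 4 := Int.le_of_dvd four_pos hfour
    interval_cases q <;> lia

end Arithmetic

theorem stmt_2 (p D : ℕ) (hp : p.Prime) (hD : D = p ∨ D = 2 * p)
    (hns : ¬ IsSquare D) (h4 : 4 ∣ cfPeriod (Real.sqrt D)) :
    ∃ k : ℕ, 1 ≤ k ∧ k ≤ cfPeriod (Real.sqrt D) ∧ cfA (Real.sqrt D) k = 1 := by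
  have hirr : Irrational √(D : ℝ) := irrational_sqrt_natCast_iff.2 hns
  set e := ReducedSurd.principal hirr
  by_contra! hne
  have htwo (k : ℕ) (hk : 1 ≤ k) : 2 ≤ cfA e.value k := by
    refine e.two_le_cfA_value (fun j hj hjT ↦ ?_) hk
    rw [ReducedSurd.cfA_value_principal hirr hj]
    exact hne j hj (ReducedSurd.cfPeriod_value_principal hirr ▸ hjT)
  obtain ⟨c, hc⟩ := h4
  have hmin : minimalPeriod ReducedSurd.step e = 4 * c := by
    rw [← e.cfPeriod_value, ReducedSurd.cfPeriod_value_principal, hc]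
  have hper : IsPeriodicPt ReducedSurd.step (4 * c) e := hmin ▸ isPeriodicPt_minimalPeriod _ _
  have hpos : 0 < 4 * c := hmin ▸ e.minimalPeriod_step_pos
  set μ := ReducedSurd.step^[2 * c] e
  have hμ : μ.step = μ.reverse :=
    ReducedSurd.step_iterate_half (ReducedSurd.step_principal hirr) (by rwa [← mul_assoc])
  have hden : μ.den = 1 ∨ μ.den = 2 :=
    eq_one_or_two_of_mul_eq_sub_sq hp hD hns μ.den_mul_prevDen
      (ReducedSurd.den_dvd_of_step_eq_reverse hμ) μ.den_pos μ.prevDen_pos μ.num_pos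
  rcases hden with hden1 | hden2
  · exact ReducedSurd.den_step_iterate_half_ne_one (by lia) (by lia) hden1
  · exact ReducedSurd.den_step_iterate_half_ne_two hper htwo hden2
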